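/- arXiv:2009.00042 — 6 statements merged into one kernel-verified Lean document; each statement's English description precedes it below -/
import Mathlib

section
/- Let V be a finite-dimensional real vector space, let α₁,…,α_m ∈ V, let Q₊ = {n₁α₁ + ⋯ + n_mα_m : n_i ∈ ℕ} and Q₋ = −Q₊, and let C = {x ∈ V* : x(α_i) > 0 for all i}. Let g₁,…,g_ℓ be invertible linear automorphisms of V (in the paper, g_k = s_{i₁}⋯s_{i_k} are the partial products of a reduced word in the Weyl group of a root system with simple roots α_i), acting on V* by x ↦ x ∘ g⁻¹. Let ν₁,…,ν_ℓ ∈ V with ν_k ∈ g_k(Q₋) for each k, and assume ν₁ + ⋯ + ν_k ∈ Q₊ for all k ∈ {1,…,ℓ−1} and ν₁ + ⋯ + ν_ℓ = 0. If there exist x₁,…,x_ℓ ∈ V* with x_k ∈ g_k(C) for each k and x_k − x_{k+1} ∈ C for each k ∈ {1,…,ℓ−1} (condition (A)), then ν₁ = ⋯ = ν_ℓ = 0. -/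
/-- Lemma on condition (A) (Baumann–Gaussent–Littelmann, Lemma `le:CondA`):
let `Q₊` be the set of `ℕ`-linear combinations of `α₁, …, α_m ∈ V`, `Q₋ = −Q₊`, and
`C = {x ∈ V* | ∀ i, 0 < x (α i)}`.  Let `g₁, …, g_ℓ` be linear automorphisms of `V`,
acting on the dual by `x ↦ x ∘ g⁻¹` (so `y ∈ g(C) ↔ ∀ i, 0 < y (g (α i))` and
`v ∈ g(Q₋) ↔ g⁻¹ v ∈ Q₋`).  If `ν_k ∈ g_k(Q₋)` for each `k`, the proper partial sums
`ν₁ + ⋯ + ν_k` lie in `Q₊`, the total sum is `0`, and condition (A) holds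
(there are `x_k ∈ g_k(C)` with `x_k − x_{k+1} ∈ C`), then all `ν_k` vanish. -/
theorem condA_forces_zero
    {V : Type*} [AddCommGroup V] [Module ℝ V] [FiniteDimensional ℝ V]
    {m ℓ : ℕ} (α : Fin m → V)
    (g : Fin ℓ → (V ≃ₗ[ℝ] V))
    (ν : Fin ℓ → V)
    (hν : ∀ k, ∃ nn : Fin m → ℕ, (g k).symm (ν k) = - ∑ i, (nn i : ℝ) • α i)
    (hpartial : ∀ k : Fin ℓ, (k : ℕ) + 1 < ℓ →
      ∃ nn : Fin m → ℕ, (∑ j ∈ Finset.Iic k, ν j) = ∑ i, (nn i : ℝ) • α i)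
    (htotal : (∑ j, ν j) = 0)
    (hA : ∃ x : Fin ℓ → Module.Dual ℝ V,
      (∀ k, ∀ i, 0 < x k (g k (α i))) ∧
      (∀ (k : ℕ) (h : k + 1 < ℓ), ∀ i,
        0 < (x ⟨k, Nat.lt_of_succ_lt h⟩ - x ⟨k + 1, h⟩) (α i))) :
    ∀ k, ν k = 0 := by
  obtain ⟨x, hx, hd⟩ := hA
  have hle : ∀ k, x k (ν k) ≤ 0 ∧ (x k (ν k) = 0 → ν k = 0) := by
    intro k
    obtain ⟨nn, hn⟩ := hν k
    have e : ν k = - ∑ i, (nn i : ℝ) • g k (α i) := by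
      have := congrArg (g k) hn
      simpa using this
    have e2 : x k (ν k) = - ∑ i, (nn i : ℝ) * x k (g k (α i)) := by
      rw [e]; simp
    have hnn : ∀ i ∈ Finset.univ, 0 ≤ (nn i : ℝ) * x k (g k (α i)) :=
      fun i _ => mul_nonneg (Nat.cast_nonneg _) (hx k i).le
    refine ⟨?_, fun h0 => ?_⟩
    · rw [e2]
      have := Finset.sum_nonneg hnn
      linarith
    · rw [e2, neg_eq_zero, Finset.sum_eq_zero_iff_of_nonneg hnn] at h0
      rw [e, neg_eq_zero]
      refine Finset.sum_eq_zero fun i hi => ?_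
      rcases mul_eq_zero.mp (h0 i hi) with h | h
      · rw [h, zero_smul]
      · exact absurd h (hx k i).ne'
  have key : ∀ (k : ℕ) (h : k < ℓ), x ⟨k, h⟩ (∑ j ∈ Finset.Iic ⟨k, h⟩, ν j) ≤
      ∑ j ∈ Finset.Iic (⟨k, h⟩ : Fin ℓ), x j (ν j) := by
    intro k
    induction k with
    | zero =>
      intro h
      have : Finset.Iic (⟨0, h⟩ : Fin ℓ) = {⟨0, h⟩} := by
        ext j
        simp [Fin.le_def, Fin.ext_iff]
      rw [this]; simp
    | succ k ih =>
      intro h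
      have hk : k < ℓ := Nat.lt_of_succ_lt h
      have hs : Finset.Iic (⟨k + 1, h⟩ : Fin ℓ) =
          insert ⟨k + 1, h⟩ (Finset.Iic (⟨k, hk⟩ : Fin ℓ)) := by
        ext j
        simp only [Finset.mem_Iic, Finset.mem_insert, Fin.le_def, Fin.ext_iff]
        omega
      have hni : (⟨k + 1, h⟩ : Fin ℓ) ∉ Finset.Iic (⟨k, hk⟩ : Fin ℓ) := by
        simp [Fin.le_def]
      rw [hs, Finset.sum_insert hni, Finset.sum_insert hni, map_add]
      obtain ⟨nn, hn⟩ := hpartial ⟨k, hk⟩ h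
      have h1 : 0 ≤ (x ⟨k, hk⟩ - x ⟨k + 1, h⟩) (∑ j ∈ Finset.Iic (⟨k, hk⟩ : Fin ℓ), ν j) := by
        rw [hn, map_sum]
        refine Finset.sum_nonneg fun i _ => ?_
        rw [map_smul, smul_eq_mul]
        exact mul_nonneg (Nat.cast_nonneg _) (hd k h i).le
      rw [LinearMap.sub_apply] at h1
      have h2 := ih hk
      linarith
  intro k
  have hpos : 0 < ℓ := k.pos
  have hl := key (ℓ - 1) (by omega)
  have hu : Finset.Iic (⟨ℓ - 1, by omega⟩ : Fin ℓ) = Finset.univ := by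
    ext j
    simp only [Finset.mem_Iic, Finset.mem_univ, Fin.le_def, iff_true]
    omega
  rw [hu, htotal, map_zero] at hl
  have hz : ∑ j, x j (ν j) = 0 :=
    le_antisymm (Finset.sum_nonpos fun j _ => (hle j).1) hl
  rw [Finset.sum_eq_zero_iff_of_nonpos fun j _ => (hle j).1] at hz
  exact (hle k).2 (hz k (Finset.mem_univ k))
end

section
/- Fix an integer N ≥ 1. For every upper unitriangular N×N matrix M with entries in the field ℂ((t)) of formal Laurent series, there exist an upper unitriangular matrix A all of whose entries are Laurent polynomials (elements of ℂ[t,t⁻¹] ⊆ ℂ((t))) and an upper unitriangular matrix B all of whose entries are formal power series (elements of ℂ[[t]] ⊆ ℂ((t))) such that M = A·B. (This is the equality N(𝒦) = N(ℂ[t,t⁻¹])·N(𝒪) for the group N of upper unitriangular matrices, with 𝒦 = ℂ((t)) and 𝒪 = ℂ[[t]].) -/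
/-- A square matrix is upper unitriangular if it has `1`s on the diagonal
and `0`s below the diagonal. -/
def IsUpperUnitriangular {N : ℕ} {R : Type*} [One R] [Zero R]
    (M : Matrix (Fin N) (Fin N) R) : Prop :=
  (∀ i, M i i = 1) ∧ ∀ i j : Fin N, j < i → M i j = 0

/-- A formal Laurent series is a Laurent polynomial (lies in `ℂ[t,t⁻¹] ⊆ ℂ((t))`)
iff it has finite support. -/
def IsLaurentPolynomialSeries (f : LaurentSeries ℂ) : Prop := f.support.Finite

/-- A formal Laurent series is a power series (lies in `ℂ[[t]] ⊆ ℂ((t))`)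
iff its coefficients in negative degrees vanish. -/
def IsPowerSeriesSeries (f : LaurentSeries ℂ) : Prop := ∀ n : ℤ, n < 0 → f.coeff n = 0

theorem isPS_iff (f : LaurentSeries ℂ) :
    IsPowerSeriesSeries f ↔ f ∈ (HahnSeries.ofPowerSeries ℤ ℂ).range := by
  constructor
  · intro h
    refine ⟨PowerSeries.mk fun n => f.coeff n, ?_⟩
    ext n
    rcases lt_or_ge n 0 with hn | hn
    · rw [h n hn, HahnSeries.ofPowerSeries_apply, HahnSeries.embDomain_notin_range]
      rintro ⟨m, hm⟩
      simp at hm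
      omega
    · lift n to ℕ using hn
      have := HahnSeries.ofPowerSeries_apply_coeff (Γ := ℤ) (PowerSeries.mk fun n => f.coeff n) n
      simpa using this
  · rintro ⟨g, rfl⟩ n hn
    rw [HahnSeries.ofPowerSeries_apply, HahnSeries.embDomain_notin_range]
    rintro ⟨m, hm⟩
    simp at hm
    omega

theorem laurent_split (w : LaurentSeries ℂ) :
    ∃ p q : LaurentSeries ℂ, IsLaurentPolynomialSeries p ∧ IsPowerSeriesSeries q ∧ w = p + q := by
  set q : LaurentSeries ℂ := HahnSeries.ofPowerSeries ℤ ℂ (PowerSeries.mk fun n => w.coeff n) with hq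
  have hqp : IsPowerSeriesSeries q := (isPS_iff q).2 ⟨_, rfl⟩
  refine ⟨w - q, q, ?_, hqp, by ring⟩
  refine (Set.finite_Ico w.order 0).subset ?_
  intro n hn
  rw [HahnSeries.mem_support, HahnSeries.coeff_sub] at hn
  have h0 : n < 0 := by
    by_contra h
    push Not at h
    lift n to ℕ using h
    have := HahnSeries.ofPowerSeries_apply_coeff (Γ := ℤ) (PowerSeries.mk fun n => w.coeff n) n
    apply hn
    rw [hq, sub_eq_zero]
    simpa using this.symm
  refine ⟨?_, h0⟩
  rw [hqp n h0, sub_zero] at hn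
  exact HahnSeries.order_le_of_coeff_ne_zero hn

theorem isLP_zero : IsLaurentPolynomialSeries 0 := by
  simp [IsLaurentPolynomialSeries]

theorem isLP_one : IsLaurentPolynomialSeries 1 := by
  simp [IsLaurentPolynomialSeries]

/-- Block extension of a matrix by a first row `(1, a)` and a zero column. -/
noncomputable def extM {n : ℕ} (a : Fin n → LaurentSeries ℂ)
    (A : Matrix (Fin n) (Fin n) (LaurentSeries ℂ)) :
    Matrix (Fin (n+1)) (Fin (n+1)) (LaurentSeries ℂ) :=
  Fin.cons (Fin.cons 1 a) (fun i => Fin.cons 0 (A i))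

theorem extM_unitri {n : ℕ} (a : Fin n → LaurentSeries ℂ)
    (A : Matrix (Fin n) (Fin n) (LaurentSeries ℂ)) (hA : IsUpperUnitriangular A) :
    IsUpperUnitriangular (extM a A) := by
  constructor
  · intro i
    refine Fin.cases ?_ (fun i => ?_) i
    · simp [extM]
    · simpa [extM] using hA.1 i
  · intro i j
    refine Fin.cases ?_ (fun i => ?_) i
    · intro h; simp at h
    · refine Fin.cases ?_ (fun j => ?_) j
      · intro _; simp [extM]
      · intro h
        simpa [extM] using hA.2 i j (by simpa using h)

theorem extM_forall {n : ℕ} (a : Fin n → LaurentSeries ℂ)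
    (A : Matrix (Fin n) (Fin n) (LaurentSeries ℂ)) (P : LaurentSeries ℂ → Prop)
    (h0 : P 0) (h1 : P 1) (ha : ∀ i, P (a i)) (hA : ∀ i j, P (A i j)) :
    ∀ i j, P (extM a A i j) := by
  intro i j
  refine Fin.cases ?_ (fun i => ?_) i <;> refine Fin.cases ?_ (fun j => ?_) j <;>
    simp [extM, h0, h1, ha, hA]

theorem factorization_aux (N : ℕ) : ∀
    (M : Matrix (Fin N) (Fin N) (LaurentSeries ℂ)) (_ : IsUpperUnitriangular M),
    ∃ A B : Matrix (Fin N) (Fin N) (LaurentSeries ℂ),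
      IsUpperUnitriangular A ∧ IsUpperUnitriangular B ∧
      (∀ i j, IsLaurentPolynomialSeries (A i j)) ∧
      (∀ i j, IsPowerSeriesSeries (B i j)) ∧
      M = A * B := by
  induction N with
  | zero =>
    intro M hM
    exact ⟨M, M, hM, hM, fun i => i.elim0, fun i => i.elim0, by ext i; exact i.elim0⟩
  | succ n ih =>
    intro M hM
    obtain ⟨A, B, hA, hB, hAL, hBP, hAB⟩ := ih (fun i j => M i.succ j.succ)
      ⟨fun i => hM.1 _, fun i j h => hM.2 _ _ (by simpa using h)⟩
    have hdet : B.det = 1 := by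
      rw [Matrix.det_of_upperTriangular (fun i j h => hB.2 i j h)]
      simp [hB.1]
    let v : Fin n → LaurentSeries ℂ := fun j => M 0 j.succ
    let w := Matrix.vecMul v B⁻¹
    have hw : Matrix.vecMul w B = v := by
      simp only [w, Matrix.vecMul_vecMul]
      rw [Matrix.nonsing_inv_mul _ (by rw [hdet]; exact isUnit_one), Matrix.vecMul_one]
    choose p q hp hq hpq using fun j => laurent_split (w j)
    have hwpq : w = p + q := funext hpq
    refine ⟨extM p A, extM (Matrix.vecMul q B) B, extM_unitri _ _ hA, extM_unitri _ _ hB,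
      extM_forall _ _ _ isLP_zero isLP_one hp hAL,
      extM_forall _ _ _ ?_ ?_ ?_ hBP, ?_⟩
    · exact (isPS_iff _).2 (zero_mem _)
    · exact (isPS_iff _).2 (one_mem _)
    · intro j
      rw [isPS_iff, Matrix.vecMul, dotProduct]
      exact sum_mem fun i _ => mul_mem ((isPS_iff _).1 (hq i)) ((isPS_iff _).1 (hBP i j))
    · ext1 i j
      rw [Matrix.mul_apply, Fin.sum_univ_succ]
      refine Fin.cases ?_ (fun i => ?_) i <;> refine Fin.cases ?_ (fun j => ?_) j
      · simp [extM, hM.1]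
      · have h := congrFun hw j
        rw [hwpq, Matrix.add_vecMul, Pi.add_apply, add_comm] at h
        simpa [extM, Matrix.vecMul, dotProduct] using h.symm
      · simpa [extM] using hM.2 i.succ 0 (Fin.succ_pos i)
      · have h := congrFun (congrFun hAB i) j
        simpa [extM, Matrix.mul_apply] using h

/-- `N(𝒦) = N(ℂ[t,t⁻¹])·N(𝒪)`: every upper unitriangular matrix over `ℂ((t))` factors
as an upper unitriangular matrix with Laurent-polynomial entries times an upper
unitriangular matrix with power-series entries. -/
theorem unitriangular_laurent_factorization (N : ℕ) (hN : 1 ≤ N)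
    (M : Matrix (Fin N) (Fin N) (LaurentSeries ℂ)) (hM : IsUpperUnitriangular M) :
    ∃ A B : Matrix (Fin N) (Fin N) (LaurentSeries ℂ),
      IsUpperUnitriangular A ∧ IsUpperUnitriangular B ∧
      (∀ i j, IsLaurentPolynomialSeries (A i j)) ∧
      (∀ i j, IsPowerSeriesSeries (B i j)) ∧
      M = A * B := by
  exact factorization_aux N M hM
end

section
/- Fix an integer N ≥ 1. For every invertible N×N matrix A with entries in the field ℂ((t)) of formal Laurent series, there exist invertible N×N matrices B and C over ℂ((t)) with A = B·C such that all entries of B and of B⁻¹ are Laurent polynomials (elements of ℂ[t,t⁻¹] ⊆ ℂ((t))) and all entries of C and of C⁻¹ are formal power series (elements of ℂ[[t]] ⊆ ℂ((t))). (This is the equality GL_N(𝒦) = GL_N(ℂ[t,t⁻¹])·GL_N(𝒪), with 𝒦 = ℂ((t)) and 𝒪 = ℂ[[t]], which the paper deduces from the Iwasawa decomposition and the unitriangular factorization.) -/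
namespace GLFact

abbrev K := LaurentSeries ℂ

/-- Laurent polynomials. -/
def L : Subring K where
  carrier := {f | IsLaurentPolynomialSeries f}
  mul_mem' {a b} ha hb := (Set.Finite.add ha hb).subset HahnSeries.support_mul_subset
  one_mem' := (Set.finite_singleton (0 : ℤ)).subset HahnSeries.support_single_subset
  add_mem' {a b} ha hb := (Set.Finite.union ha hb).subset (HahnSeries.support_add_subset _ _)
  zero_mem' := by simp [IsLaurentPolynomialSeries]
  neg_mem' {a} ha := by simpa [IsLaurentPolynomialSeries] using ha

theorem coeff_mul_eq_zero {a b : K} {p q : ℤ} (ha : ∀ n < p, a.coeff n = 0)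
    (hb : ∀ n < q, b.coeff n = 0) (n : ℤ) (hn : n < p + q) : (a * b).coeff n = 0 := by
  by_contra h
  have h1 : n ∈ (a * b).support := h
  obtain ⟨x, hx, y, hy, hxy⟩ := HahnSeries.support_mul_subset h1
  have h2 : p ≤ x := by
    by_contra hc
    exact hx (ha x (not_le.1 hc))
  have h3 : q ≤ y := by
    by_contra hc
    exact hy (hb y (not_le.1 hc))
  simp only at hxy
  omega

/-- Power series. -/
def O : Subring K where
  carrier := {f | IsPowerSeriesSeries f}
  mul_mem' {a b} ha hb := fun n hn => coeff_mul_eq_zero ha hb n (by simpa using hn)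
  one_mem' := fun n hn => by
    rw [HahnSeries.coeff_one, if_neg hn.ne]
  add_mem' {a b} ha hb := fun n hn => by
    rw [HahnSeries.coeff_add, ha n hn, hb n hn, add_zero]
  zero_mem' := fun n hn => rfl
  neg_mem' {a} ha := fun n hn => by
    rw [HahnSeries.coeff_neg, ha n hn, neg_zero]

variable {N : ℕ}

/-- Invertible matrices over a subring. -/
def G (N : ℕ) (R : Subring K) : Subgroup (Matrix (Fin N) (Fin N) K)ˣ where
  carrier := {g | (∀ i j, g.val i j ∈ R) ∧ ∀ i j, (g⁻¹).val i j ∈ R}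
  mul_mem' {a b} ha hb := by
    refine ⟨fun i j => ?_, fun i j => ?_⟩
    · rw [Units.val_mul, Matrix.mul_apply]
      exact sum_mem fun k _ => mul_mem (ha.1 _ _) (hb.1 _ _)
    · rw [mul_inv_rev, Units.val_mul, Matrix.mul_apply]
      exact sum_mem fun k _ => mul_mem (hb.2 _ _) (ha.2 _ _)
  one_mem' := by
    have : ∀ i j, (1 : Matrix (Fin N) (Fin N) K) i j ∈ R := fun i j => by
      rw [Matrix.one_apply]; split_ifs
      · exact one_mem _
      · exact zero_mem _
    exact ⟨this, by simpa using this⟩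
  inv_mem' {a} ha := ⟨ha.2, by simpa using ha.1⟩

/-- Elements approximable by Laurent polynomial matrices. -/
def H (N : ℕ) : Submonoid (Matrix (Fin N) (Fin N) K)ˣ where
  carrier := {A | ∀ M, ∃ B ∈ G N L, ∃ C ∈ G N O, A * M = B * M * C}
  one_mem' := fun M => ⟨1, one_mem _, 1, one_mem _, by simp⟩
  mul_mem' {a b} ha hb := fun M => by
    obtain ⟨B, hB, C, hC, h⟩ := hb M
    obtain ⟨B', hB', C', hC', h'⟩ := ha (B * M)
    refine ⟨B' * B, mul_mem hB' hB, C' * C, mul_mem hC' hC, ?_⟩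
    rw [mul_assoc, h, ← mul_assoc, h']
    simp only [mul_assoc]

/-- Transvection as a unit. -/
noncomputable def tv (i j : Fin N) (h : i ≠ j) (c : K) : (Matrix (Fin N) (Fin N) K)ˣ where
  val := Matrix.transvection i j c
  inv := Matrix.transvection i j (-c)
  val_inv := by rw [Matrix.transvection_mul_transvection_same _ _ h]; simp
  inv_val := by rw [Matrix.transvection_mul_transvection_same _ _ h]; simp

theorem tv_mul (i j : Fin N) (h : i ≠ j) (c d : K) : tv i j h c * tv i j h d = tv i j h (c + d) := by
  ext1
  exact Matrix.transvection_mul_transvection_same _ _ h _ _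

theorem tv_inv (i j : Fin N) (h : i ≠ j) (c : K) : (tv i j h c)⁻¹ = tv i j h (-c) := by
  ext1
  rfl

theorem tv_mem (R : Subring K) (i j : Fin N) (h : i ≠ j) (c : K) (hc : c ∈ R) :
    tv i j h c ∈ G N R := by
  have : ∀ c ∈ R, ∀ a b, (tv i j h c).val a b ∈ R := fun c hc a b => by
    change ((1 : Matrix (Fin N) (Fin N) K) + Matrix.single i j c) a b ∈ R
    rw [Matrix.add_apply, Matrix.one_apply, Matrix.single_apply]
    refine add_mem ?_ ?_ <;> split_ifs <;> simp [one_mem, zero_mem, hc]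
  refine ⟨this c hc, ?_⟩
  rw [tv_inv]
  exact this _ (neg_mem hc)

theorem exists_bound (x : K) : ∃ q : ℤ, ∀ n < q, x.coeff n = 0 :=
  ⟨x.order, fun _ hn => HahnSeries.coeff_eq_zero_of_lt_order hn⟩

theorem exists_trunc (f : K) (m : ℤ) : ∃ p ∈ L, ∀ n < m, (f - p).coeff n = 0 := by
  refine ⟨HahnSeries.truncLT m f, ?_, fun n hn => ?_⟩
  · refine (Set.finite_Ico f.order m).subset fun n hn => ?_
    have hn' : (HahnSeries.truncLT m f).coeff n ≠ 0 := hn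
    rw [HahnSeries.coeff_truncLT] at hn'
    split_ifs at hn' with h
    · exact ⟨HahnSeries.order_le_of_coeff_ne_zero hn', h⟩
    · exact absurd rfl hn'
  · rw [HahnSeries.coeff_sub, HahnSeries.coeff_truncLT, if_pos hn, sub_self]

theorem tv_mem_H (i j : Fin N) (h : i ≠ j) (c : K) : tv i j h c ∈ H N := by
  intro M
  choose q hq using fun ab : Fin N × Fin N => exists_bound ((M⁻¹).val ab.1 i * M.val j ab.2)
  obtain ⟨m, hm⟩ := Finite.exists_le fun ab => - q ab
  obtain ⟨p, hp, hpc⟩ := exists_trunc c m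
  have key : ∀ e : K, (∀ n < m, e.coeff n = 0) →
      ∀ a b, (M⁻¹ * tv i j h e * M).val a b ∈ O := by
    intro e he a b
    have h1 : (M⁻¹ * tv i j h e * M).val =
        1 + (M⁻¹).val * Matrix.single i j e * M.val := by
      simp only [Units.val_mul]
      change (M⁻¹).val * (1 + Matrix.single i j e) * M.val = _
      rw [mul_add, add_mul, mul_one, Units.inv_mul]
    have h2 : ((M⁻¹).val * Matrix.single i j e * M.val) a b =
        e * ((M⁻¹).val a i * M.val j b) := by
      rw [Matrix.mul_assoc, Matrix.mul_apply, Finset.sum_eq_single i]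
      · rw [Matrix.single_mul_apply_same]; ring
      · intro k _ hk
        rw [Matrix.single_mul_apply_of_ne _ _ _ _ _ hk, mul_zero]
      · simp
    rw [h1, Matrix.add_apply, h2]
    refine add_mem ((one_mem (G N O)).1 a b) ?_
    intro n hn
    refine coeff_mul_eq_zero he (hq (a, b)) n ?_
    have := hm (a, b)
    omega
  refine ⟨tv i j h p, tv_mem _ _ _ _ _ hp, M⁻¹ * tv i j h (c - p) * M, ⟨key _ hpc, ?_⟩, ?_⟩
  · have : (M⁻¹ * tv i j h (c - p) * M)⁻¹ = M⁻¹ * tv i j h (-(c - p)) * M := by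
      rw [mul_inv_rev, mul_inv_rev, tv_inv, inv_inv, mul_assoc]
    rw [this]
    refine key _ fun n hn => ?_
    rw [HahnSeries.coeff_neg, hpc n hn, neg_zero]
  · have : tv i j h c = tv i j h p * tv i j h (c - p) := by rw [tv_mul]; congr 1; ring
    rw [this]; group

/-- Diagonal unit. -/
noncomputable def dg (d : Fin N → Kˣ) : (Matrix (Fin N) (Fin N) K)ˣ where
  val := Matrix.diagonal fun i => (d i).val
  inv := Matrix.diagonal fun i => ((d i)⁻¹).val
  val_inv := by simp
  inv_val := by simp

theorem dg_mul (d e : Fin N → Kˣ) : dg d * dg e = dg (d * e) := by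
  ext1
  simp [dg]

theorem dg_mem (R : Subring K) (d : Fin N → Kˣ) (h : ∀ i, (d i).val ∈ R)
    (h' : ∀ i, ((d i)⁻¹).val ∈ R) : dg d ∈ G N R := by
  refine ⟨fun i j => ?_, fun i j => ?_⟩
  · change Matrix.diagonal _ i j ∈ R
    rw [Matrix.diagonal_apply]
    split_ifs
    exacts [h i, zero_mem _]
  · change Matrix.diagonal _ i j ∈ R
    rw [Matrix.diagonal_apply]
    split_ifs
    exacts [h' i, zero_mem _]

theorem dg_tv (d : Fin N → Kˣ) (i j : Fin N) (h : i ≠ j) (c : K) :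
    dg d * tv i j h c = tv i j h ((d i).val * c * ((d j)⁻¹).val) * dg d := by
  ext1
  change Matrix.diagonal _ * (1 + Matrix.single i j _) =
    (1 + Matrix.single i j _) * Matrix.diagonal _
  rw [mul_add, add_mul, mul_one, one_mul]
  congr 1
  ext a b
  rw [Matrix.diagonal_mul, Matrix.mul_diagonal, Matrix.single_apply, Matrix.single_apply]
  split_ifs with hh
  · obtain ⟨rfl, rfl⟩ := hh
    simp [mul_assoc]
  · simp

theorem list_mem (l : List (Matrix.TransvectionStruct (Fin N) K)) :
    ∃ T ∈ H N, T.val = (l.map Matrix.TransvectionStruct.toMatrix).prod := by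
  induction l with
  | nil => exact ⟨1, one_mem _, by simp⟩
  | cons t l ih =>
    obtain ⟨T, hT, h⟩ := ih
    refine ⟨tv t.i t.j t.hij t.c * T, mul_mem (tv_mem_H _ _ _ _) hT, ?_⟩
    rw [Units.val_mul, h, List.map_cons, List.prod_cons]
    rfl

theorem list_conj (d : Fin N → Kˣ) (l : List (Matrix.TransvectionStruct (Fin N) K)) :
    ∃ T ∈ H N, (dg d).val * (l.map Matrix.TransvectionStruct.toMatrix).prod =
      T.val * (dg d).val := by
  induction l with
  | nil => exact ⟨1, one_mem _, by simp⟩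
  | cons t l ih =>
    obtain ⟨T, hT, h⟩ := ih
    refine ⟨tv t.i t.j t.hij ((d t.i).val * t.c * ((d t.j)⁻¹).val) * T,
      mul_mem (tv_mem_H _ _ _ _) hT, ?_⟩
    have := congrArg Units.val (dg_tv d t.i t.j t.hij t.c)
    rw [Units.val_mul, Units.val_mul] at this
    rw [List.map_cons, List.prod_cons, Units.val_mul, mul_assoc, ← h, ← mul_assoc, ← mul_assoc,
      ← this]
    rfl

theorem unit_split (f : Kˣ) : ∃ s u : Kˣ, f = s * u ∧ s.val ∈ L ∧ (s⁻¹).val ∈ L ∧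
    u.val ∈ O ∧ (u⁻¹).val ∈ O := by
  have hO : ∀ g : PowerSeries ℂ, HahnSeries.ofPowerSeries ℤ ℂ g ∈ O := fun g n hn => by
    rw [PowerSeries.coeff_coe, if_pos hn]
  have hs : ∀ n : ℤ, (HahnSeries.single n (1 : ℂ)) ∈ L := fun n =>
    (Set.finite_singleton n).subset HahnSeries.support_single_subset
  have hu : IsUnit (LaurentSeries.powerSeriesPart f.val) := by
    rw [PowerSeries.isUnit_iff_constantCoeff, ← PowerSeries.coeff_zero_eq_constantCoeff_apply,
      LaurentSeries.powerSeriesPart_coeff]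
    simp
  obtain ⟨g, hg⟩ := hu
  refine ⟨⟨HahnSeries.single (HahnSeries.order f.val) 1,
    HahnSeries.single (-HahnSeries.order f.val) 1, by simp, by simp⟩,
    Units.map (HahnSeries.ofPowerSeries ℤ ℂ).toMonoidHom g, ?_, hs _, hs _, hO _, ?_⟩
  · ext1
    rw [Units.val_mul]
    change f.val = HahnSeries.single _ 1 * HahnSeries.ofPowerSeries ℤ ℂ g.val
    rw [hg, LaurentSeries.single_order_mul_powerSeriesPart]
  · rw [← map_inv]
    exact hO _

theorem main (A : (Matrix (Fin N) (Fin N) K)ˣ) : ∃ B ∈ G N L, ∃ C ∈ G N O, A = B * C := by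
  obtain ⟨l, l', D, hD⟩ :=
    Matrix.Pivot.exists_list_transvec_mul_diagonal_mul_list_transvec A.val
  have hdet : A.val.det ≠ 0 := ((Matrix.isUnit_iff_isUnit_det _).1 A.isUnit).ne_zero
  rw [hD, Matrix.det_mul, Matrix.det_mul, Matrix.det_diagonal] at hdet
  have hD0 : ∀ i, D i ≠ 0 := fun i hi => by
    apply hdet
    rw [Finset.prod_eq_zero (Finset.mem_univ i) hi]
    simp
  let d : Fin N → Kˣ := fun i => Units.mk0 (D i) (hD0 i)
  choose s u hsu h1 h2 h3 h4 using fun i => unit_split (d i)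
  obtain ⟨T, hT, hTl⟩ := list_mem l
  obtain ⟨T', hT', hTl'⟩ := list_conj d l'
  have hA : A = (T * T') * dg s * dg u := by
    have : dg s * dg u = dg d := by
      rw [dg_mul]; congr 1; funext i; exact (hsu i).symm
    rw [mul_assoc, this]
    ext1
    rw [hD, Units.val_mul, Units.val_mul, mul_assoc, mul_assoc, ← hTl', hTl]
    rfl
  obtain ⟨B, hB, C, hC, h⟩ := mul_mem hT hT' (dg s)
  refine ⟨B * dg s, mul_mem hB (dg_mem _ _ h1 h2), C * dg u, mul_mem hC (dg_mem _ _ h3 h4), ?_⟩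
  rw [hA, h]
  simp only [mul_assoc]

end GLFact

/-- `GL_N(𝒦) = GL_N(ℂ[t,t⁻¹])·GL_N(𝒪)`: every invertible matrix `A` over `ℂ((t))`
factors as `A = B·C` where `B, B⁻¹` have Laurent-polynomial entries and `C, C⁻¹`
have power-series entries. -/
theorem gl_laurent_factorization (N : ℕ) (hN : 1 ≤ N)
    (A : Matrix (Fin N) (Fin N) (LaurentSeries ℂ)) (hA : IsUnit A) :
    ∃ B C : (Matrix (Fin N) (Fin N) (LaurentSeries ℂ))ˣ,
      A = (B : Matrix (Fin N) (Fin N) (LaurentSeries ℂ)) *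
          (C : Matrix (Fin N) (Fin N) (LaurentSeries ℂ)) ∧
      (∀ i j, IsLaurentPolynomialSeries
        ((B : Matrix (Fin N) (Fin N) (LaurentSeries ℂ)) i j)) ∧
      (∀ i j, IsLaurentPolynomialSeries
        ((↑(B⁻¹) : Matrix (Fin N) (Fin N) (LaurentSeries ℂ)) i j)) ∧
      (∀ i j, IsPowerSeriesSeries
        ((C : Matrix (Fin N) (Fin N) (LaurentSeries ℂ)) i j)) ∧
      (∀ i j, IsPowerSeriesSeries
        ((↑(C⁻¹) : Matrix (Fin N) (Fin N) (LaurentSeries ℂ)) i j)) := by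

  obtain ⟨A, rfl⟩ := hA
  obtain ⟨B, hB, C, hC, h⟩ := GLFact.main A
  exact ⟨B, C, by rw [h, Units.val_mul], hB.1, hB.2, hC.1, hC.2⟩
end

section
/- Fix an integer N ≥ 1. (Existence) Every invertible N×N matrix A with entries in ℂ((t)) can be written as A = U·D·K, where U is an upper unitriangular matrix over ℂ((t)), D = diag(t^{μ₁},…,t^{μ_N}) for some tuple μ = (μ₁,…,μ_N) ∈ ℤ^N, and K is an invertible matrix such that all entries of K and of K⁻¹ lie in ℂ[[t]]. (Uniqueness) The tuple μ is uniquely determined by A: if U·diag(t^{μ₁},…,t^{μ_N})·K = U'·diag(t^{μ'₁},…,t^{μ'_N})·K' with U, U' upper unitriangular over ℂ((t)) and K, K', K⁻¹, (K')⁻¹ having entries in ℂ[[t]], then μ = μ'. (This is the Iwasawa decomposition G(𝒦) = ⊔_μ N(𝒦)·t^μ·G(𝒪) for G = GL_N.) -/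
section helpers

open Matrix

lemma iw_isPS_iff (f : LaurentSeries ℂ) :
    IsPowerSeriesSeries f ↔ ∃ g : PowerSeries ℂ, HahnSeries.ofPowerSeries ℤ ℂ g = f := by
  constructor
  · intro h
    refine ⟨PowerSeries.mk fun n => f.coeff n, ?_⟩
    ext n
    rw [PowerSeries.coeff_coe]
    split_ifs with hn
    · exact (h n hn).symm
    · rw [PowerSeries.coeff_mk]
      congr 1
      omega
  · rintro ⟨g, rfl⟩ n hn
    rw [PowerSeries.coeff_coe, if_pos hn]

/-- one column step killing entry `(i, j)` using columns `i` and `j`. -/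
lemma iw_step {N : ℕ} {R F : Type*} [CommRing R] [Field F] (φ : R →+* F)
    (h : ∀ a b : F, ∃ c : R, a = φ c * b ∨ b = φ c * a)
    (B : Matrix (Fin N) (Fin N) F) (i j : Fin N) (hij : j ≠ i) :
    ∃ P : Matrix (Fin N) (Fin N) R, IsUnit P ∧ (B * P.map φ) i j = 0 ∧
      (∀ r k, k ≠ i → k ≠ j → (B * P.map φ) r k = B r k) ∧
      (∀ r, B r i = 0 → B r j = 0 → (B * P.map φ) r i = 0 ∧ (B * P.map φ) r j = 0) := by
  have key : ∀ (i j : Fin N) (c : R), (transvection i j c).map φ = transvection i j (φ c) := by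
    intro i j c
    ext a b
    simp [transvection, Matrix.one_apply, Matrix.single_apply, apply_ite φ]
  obtain ⟨c, hc | hc⟩ := h (B i j) (B i i)
  · refine ⟨transvection i j (-c), ?_, ?_, ?_, ?_⟩
    · rw [Matrix.isUnit_iff_isUnit_det, det_transvection_of_ne _ _ hij.symm]
      exact isUnit_one
    · rw [key, mul_transvection_apply_same, hc]
      simp
    · intro r k hki hkj
      rw [key, mul_transvection_apply_of_ne _ _ _ _ hkj]
    · intro r h1 h2
      rw [key, mul_transvection_apply_same, mul_transvection_apply_of_ne _ _ _ _ hij.symm]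
      simp [h1, h2]
  · have key2 : ∀ (C : Matrix (Fin N) (Fin N) F) (r k : Fin N),
        (C * ((Equiv.swap i j).permMatrix R).map φ) r k = C r (Equiv.swap i j k) := by
      intro C r k
      have : ((Equiv.swap i j).permMatrix R).map φ = (Equiv.swap i j).permMatrix F := by
        ext a b
        simp [Equiv.Perm.permMatrix, PEquiv.toMatrix_apply, apply_ite φ]
      rw [this, Matrix.mul_apply, Finset.sum_eq_single (Equiv.swap i j k)]
      · simp [Equiv.Perm.permMatrix, PEquiv.toMatrix_apply]
      · intro b _ hb
        have : Equiv.swap i j b ≠ k := by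
          rintro rfl
          simp at hb
        simp [Equiv.Perm.permMatrix, PEquiv.toMatrix_apply, this]
      · simp
    refine ⟨transvection j i (-c) * (Equiv.swap i j).permMatrix R, ?_, ?_, ?_, ?_⟩
    · rw [Matrix.isUnit_iff_isUnit_det, det_mul, det_transvection_of_ne _ _ hij,
        Matrix.det_permutation, one_mul]
      exact (Units.isUnit _).map (Int.castRingHom R)
    · rw [Matrix.map_mul, ← Matrix.mul_assoc, key2, key, Equiv.swap_apply_right,
        mul_transvection_apply_same, hc]
      simp
    · intro r k hki hkj
      rw [Matrix.map_mul, ← Matrix.mul_assoc, key2, key, Equiv.swap_apply_of_ne_of_ne hki hkj,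
        mul_transvection_apply_of_ne _ _ _ _ hki]
    · intro r h1 h2
      rw [Matrix.map_mul, ← Matrix.mul_assoc, key2, key2, key, Equiv.swap_apply_right,
        Equiv.swap_apply_left, mul_transvection_apply_same,
        mul_transvection_apply_of_ne _ _ _ _ hij]
      simp [h1, h2]

lemma iw_row {N : ℕ} {R F : Type*} [CommRing R] [Field F] (φ : R →+* F)
    (h : ∀ a b : F, ∃ c : R, a = φ c * b ∨ b = φ c * a)
    (B : Matrix (Fin N) (Fin N) F) (i : Fin N) (hB : ∀ r k, i < r → k < r → B r k = 0) (s : ℕ) :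
    ∃ P : Matrix (Fin N) (Fin N) R, IsUnit P ∧
      (∀ r k, i < r → k < r → (B * P.map φ) r k = 0) ∧
      (∀ k : Fin N, k < i → k.val < s → (B * P.map φ) i k = 0) := by
  induction s with
  | zero =>
    refine ⟨1, isUnit_one, ?_, ?_⟩
    · simpa using hB
    · intro k _ hk
      omega
  | succ s ih =>
    obtain ⟨P, hP, h1, h2⟩ := ih
    by_cases hs : s < i.val
    · obtain ⟨Q, hQ, q1, q2, q3⟩ := iw_step φ h (B * P.map φ) i ⟨s, by omega⟩
        (by intro hh; simp [← hh] at hs)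
      refine ⟨P * Q, hP.mul hQ, ?_, ?_⟩
      · intro r k hr hk
        rw [Matrix.map_mul, ← Matrix.mul_assoc]
        have q := q3 r (h1 r i hr hr) (h1 r ⟨s, by omega⟩ hr
          (by rw [Fin.lt_def] at hr ⊢; simp; omega))
        by_cases e1 : k = i
        · rw [e1]; exact q.1
        by_cases e2 : k = ⟨s, by omega⟩
        · rw [e2]; exact q.2
        rw [q2 r k e1 e2]
        exact h1 r k hr hk
      · intro k hk hks
        rw [Matrix.map_mul, ← Matrix.mul_assoc]
        by_cases e2 : k = ⟨s, by omega⟩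
        · rw [e2]; exact q1
        rw [q2 i k hk.ne e2]
        refine h2 k hk ?_
        have : k.val ≠ s := fun hh => e2 (Fin.ext hh)
        omega
    · refine ⟨P, hP, h1, fun k hk _ => h2 k hk ?_⟩
      rw [Fin.lt_def] at hk
      omega

lemma iw_tri {N : ℕ} {R F : Type*} [CommRing R] [Field F] (φ : R →+* F)
    (h : ∀ a b : F, ∃ c : R, a = φ c * b ∨ b = φ c * a)
    (B : Matrix (Fin N) (Fin N) F) (m : ℕ) :
    ∃ P : Matrix (Fin N) (Fin N) R, IsUnit P ∧
      (∀ r k : Fin N, N ≤ r.val + m → k < r → (B * P.map φ) r k = 0) := by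
  induction m with
  | zero =>
    refine ⟨1, isUnit_one, ?_⟩
    intro r k hr
    omega
  | succ m ih =>
    obtain ⟨P, hP, h1⟩ := ih
    by_cases hm : m < N
    · obtain ⟨Q, hQ, q1, q2⟩ := iw_row φ h (B * P.map φ) ⟨N - 1 - m, by omega⟩
        (by intro r k hr hk
            refine h1 r k ?_ hk
            rw [Fin.lt_def] at hr
            simp at hr
            omega) N
      refine ⟨P * Q, hP.mul hQ, ?_⟩
      intro r k hr hk
      rw [Matrix.map_mul, ← Matrix.mul_assoc]
      by_cases e : r = ⟨N - 1 - m, by omega⟩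
      · rw [e] at hk ⊢
        exact q2 k hk k.2
      · refine q1 r k ?_ hk
        have : r.val ≠ N - 1 - m := fun hh => e (Fin.ext hh)
        rw [Fin.lt_def]
        simp
        omega
    · exact ⟨P, hP, fun r k _ hk => h1 r k (by omega) hk⟩

lemma iw_factor (f : LaurentSeries ℂ) (hf : f ≠ 0) :
    ∃ (n : ℤ) (u : PowerSeries ℂ), IsUnit u ∧
      f = HahnSeries.single n 1 * HahnSeries.ofPowerSeries ℤ ℂ u := by
  refine ⟨f.order, LaurentSeries.powerSeriesPart f, ?_,
    (LaurentSeries.single_order_mul_powerSeriesPart f).symm⟩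
  rw [PowerSeries.isUnit_iff_constantCoeff, ← PowerSeries.coeff_zero_eq_constantCoeff_apply,
    LaurentSeries.powerSeriesPart_coeff]
  simpa using hf

lemma iw_val (a b : LaurentSeries ℂ) : ∃ c : PowerSeries ℂ,
    a = HahnSeries.ofPowerSeries ℤ ℂ c * b ∨ b = HahnSeries.ofPowerSeries ℤ ℂ c * a := by
  by_cases hb : b = 0
  · exact ⟨0, Or.inr (by simp [hb])⟩
  by_cases ha : a = 0
  · exact ⟨0, Or.inl (by simp [ha])⟩
  rcases ValuationRing.isInteger_or_isInteger (PowerSeries ℂ) (a / b) with ⟨c, hc⟩ | ⟨c, hc⟩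
  · refine ⟨c, Or.inl ?_⟩
    have hc' : HahnSeries.ofPowerSeries ℤ ℂ c = a / b := hc
    rw [hc']
    field_simp
  · refine ⟨c, Or.inr ?_⟩
    have hc' : HahnSeries.ofPowerSeries ℤ ℂ c = (a / b)⁻¹ := hc
    rw [hc']
    field_simp

lemma iw_diag {N : ℕ} {F : Type*} [CommRing F] (V W : Matrix (Fin N) (Fin N) F)
    (hV : ∀ i j, j < i → V i j = 0) (hW : ∀ i j, j < i → W i j = 0) (i : Fin N) :
    (V * W) i i = V i i * W i i := by
  rw [Matrix.mul_apply, Finset.sum_eq_single i]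
  · intro b _ hb
    rcases lt_or_gt_of_ne hb with h | h
    · rw [hV i b h, zero_mul]
    · rw [hW b i h, mul_zero]
  · simp

lemma iw_le {N : ℕ} (U U' : Matrix (Fin N) (Fin N) (LaurentSeries ℂ)) (μ μ' : Fin N → ℤ)
    (K K' : (Matrix (Fin N) (Fin N) (LaurentSeries ℂ))ˣ)
    (hU : IsUpperUnitriangular U) (hU' : IsUpperUnitriangular U')
    (hK : ∀ i j, IsPowerSeriesSeries
      ((↑(K⁻¹) : Matrix (Fin N) (Fin N) (LaurentSeries ℂ)) i j))
    (hK' : ∀ i j, IsPowerSeriesSeries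
      ((K' : Matrix (Fin N) (Fin N) (LaurentSeries ℂ)) i j))
    (h : U * Matrix.diagonal (fun i => (HahnSeries.single (μ i) 1 : LaurentSeries ℂ))
            * (K : Matrix (Fin N) (Fin N) (LaurentSeries ℂ)) =
          U' * Matrix.diagonal (fun i => (HahnSeries.single (μ' i) 1 : LaurentSeries ℂ))
            * (K' : Matrix (Fin N) (Fin N) (LaurentSeries ℂ))) (i : Fin N) : μ' i ≤ μ i := by
  have hbt : U'.BlockTriangular id := fun a b hab => hU'.2 a b hab
  have hdet : U'.det = 1 := by
    rw [Matrix.det_of_upperTriangular hbt]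
    simp [hU'.1]
  have hu : IsUnit U'.det := by rw [hdet]; exact isUnit_one
  have : Invertible U' := Matrix.invertibleOfIsUnitDet _ hu
  have hV : ∀ a b, b < a → U'⁻¹ a b = 0 :=
    fun a b hab => (Matrix.blockTriangular_inv_of_blockTriangular hbt) hab
  have hVU : U'⁻¹ * U' = 1 := Matrix.nonsing_inv_mul _ hu
  have hVii : U'⁻¹ i i = 1 := by
    have := iw_diag U'⁻¹ U' hV hU'.2 i
    rw [hVU, hU'.1] at this
    simpa using this.symm
  have h2 : U'⁻¹ * (U * Matrix.diagonal
      (fun i => (HahnSeries.single (μ i) 1 : LaurentSeries ℂ))) =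
      Matrix.diagonal (fun i => (HahnSeries.single (μ' i) 1 : LaurentSeries ℂ)) *
        ((K' : Matrix (Fin N) (Fin N) (LaurentSeries ℂ)) *
          (↑(K⁻¹) : Matrix (Fin N) (Fin N) (LaurentSeries ℂ))) := by
    have h3 := congrArg (fun X => U'⁻¹ *
      (X * (↑(K⁻¹) : Matrix (Fin N) (Fin N) (LaurentSeries ℂ)))) h
    simp only [Matrix.mul_assoc, Units.mul_inv, Matrix.mul_one] at h3
    rw [h3, ← Matrix.mul_assoc, hVU, Matrix.one_mul]
  have h4 := congrFun (congrFun h2 i) i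
  rw [iw_diag _ _ hV (by
    intro a b hab
    rw [Matrix.mul_diagonal, hU.2 a b hab, zero_mul]), hVii, Matrix.mul_diagonal, hU.1,
    Matrix.diagonal_mul, one_mul, one_mul] at h4
  choose g hg using fun a b => (iw_isPS_iff _).1 (hK a b)
  choose g' hg' using fun a b => (iw_isPS_iff _).1 (hK' a b)
  have hL : IsPowerSeriesSeries (((K' : Matrix (Fin N) (Fin N) (LaurentSeries ℂ)) *
          (↑(K⁻¹) : Matrix (Fin N) (Fin N) (LaurentSeries ℂ))) i i) := by
    rw [iw_isPS_iff]
    refine ⟨∑ k, g' i k * g k i, ?_⟩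
    rw [Matrix.mul_apply, map_sum]
    refine Finset.sum_congr rfl fun k _ => ?_
    rw [map_mul, hg, hg']
  by_contra hlt
  have h5 := congrArg (fun f => HahnSeries.coeff f (μ i)) h4
  have e : μ i = (μ i - μ' i) + μ' i := by ring
  simp only [HahnSeries.coeff_single_same] at h5
  rw [e, HahnSeries.coeff_single_mul_add, hL _ (by omega)] at h5
  simp at h5

end helpers

/-- Iwasawa decomposition `GL_N(𝒦) = ⊔_μ N(𝒦)·t^μ·GL_N(𝒪)`: every invertible matrix
over `ℂ((t))` can be written as `U·diag(t^{μ₁},…,t^{μ_N})·K` with `U` upper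
unitriangular and `K, K⁻¹` with power-series entries, and the tuple `μ ∈ ℤ^N` is
uniquely determined. Here `t^{μ i}` is the Laurent series `HahnSeries.single (μ i) 1`. -/
theorem iwasawa_decomposition_glN (N : ℕ) (hN : 1 ≤ N)
    (A : Matrix (Fin N) (Fin N) (LaurentSeries ℂ)) (hA : IsUnit A) :
    (∃ (U : Matrix (Fin N) (Fin N) (LaurentSeries ℂ)) (μ : Fin N → ℤ)
        (K : (Matrix (Fin N) (Fin N) (LaurentSeries ℂ))ˣ),
        IsUpperUnitriangular U ∧
        (∀ i j, IsPowerSeriesSeries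
          ((K : Matrix (Fin N) (Fin N) (LaurentSeries ℂ)) i j)) ∧
        (∀ i j, IsPowerSeriesSeries
          ((↑(K⁻¹) : Matrix (Fin N) (Fin N) (LaurentSeries ℂ)) i j)) ∧
        A = U * Matrix.diagonal (fun i => (HahnSeries.single (μ i) 1 : LaurentSeries ℂ))
              * (K : Matrix (Fin N) (Fin N) (LaurentSeries ℂ))) ∧
    (∀ (U U' : Matrix (Fin N) (Fin N) (LaurentSeries ℂ)) (μ μ' : Fin N → ℤ)
        (K K' : (Matrix (Fin N) (Fin N) (LaurentSeries ℂ))ˣ),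
        IsUpperUnitriangular U → IsUpperUnitriangular U' →
        (∀ i j, IsPowerSeriesSeries
          ((K : Matrix (Fin N) (Fin N) (LaurentSeries ℂ)) i j)) →
        (∀ i j, IsPowerSeriesSeries
          ((↑(K⁻¹) : Matrix (Fin N) (Fin N) (LaurentSeries ℂ)) i j)) →
        (∀ i j, IsPowerSeriesSeries
          ((K' : Matrix (Fin N) (Fin N) (LaurentSeries ℂ)) i j)) →
        (∀ i j, IsPowerSeriesSeries
          ((↑(K'⁻¹) : Matrix (Fin N) (Fin N) (LaurentSeries ℂ)) i j)) →
        U * Matrix.diagonal (fun i => (HahnSeries.single (μ i) 1 : LaurentSeries ℂ))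
            * (K : Matrix (Fin N) (Fin N) (LaurentSeries ℂ)) =
          U' * Matrix.diagonal (fun i => (HahnSeries.single (μ' i) 1 : LaurentSeries ℂ))
            * (K' : Matrix (Fin N) (Fin N) (LaurentSeries ℂ)) →
        μ = μ') := by
  classical
  refine ⟨?_, ?_⟩
  · obtain ⟨P, hP, h0⟩ := iw_tri (HahnSeries.ofPowerSeries ℤ ℂ) iw_val A N
    set B := A * P.map (HahnSeries.ofPowerSeries ℤ ℂ) with hB
    have htri : ∀ r k, k < r → B r k = 0 := fun r k hk => h0 r k (by omega) hk
    have hBu : IsUnit B := hA.mul (hP.map (HahnSeries.ofPowerSeries ℤ ℂ).mapMatrix)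
    have hbt : B.BlockTriangular id := fun a b hab => htri a b hab
    have hdiag : ∀ i, B i i ≠ 0 := by
      have hd := (Matrix.isUnit_iff_isUnit_det _).1 hBu
      rw [Matrix.det_of_upperTriangular hbt, isUnit_iff_ne_zero, Finset.prod_ne_zero_iff] at hd
      exact fun i => hd i (Finset.mem_univ i)
    choose μ u hu hf using fun i => iw_factor (B i i) (hdiag i)
    have hDu : IsUnit (Matrix.diagonal u) := by
      rw [Matrix.isUnit_iff_isUnit_det, Matrix.det_diagonal]
      exact (IsUnit.prod_univ_iff).2 hu
    obtain ⟨p, rfl⟩ := hP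
    obtain ⟨d, hd⟩ := hDu
    let Φ := (HahnSeries.ofPowerSeries ℤ ℂ).mapMatrix (m := Fin N)
    refine ⟨B * Matrix.diagonal (fun i => (B i i)⁻¹), μ,
      Units.map (Φ : _ →* _) (d * p⁻¹), ⟨?_, ?_⟩, ?_, ?_, ?_⟩
    · intro i
      rw [Matrix.mul_diagonal, mul_inv_cancel₀ (hdiag i)]
    · intro i j hij
      rw [Matrix.mul_diagonal, htri i j hij, zero_mul]
    · intro i j
      rw [iw_isPS_iff]
      exact ⟨_, rfl⟩
    · intro i j
      rw [iw_isPS_iff]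
      exact ⟨_, rfl⟩
    · have e1 : ((Units.map (Φ : _ →* _) (d * p⁻¹) :
          (Matrix (Fin N) (Fin N) (LaurentSeries ℂ))ˣ) :
          Matrix (Fin N) (Fin N) (LaurentSeries ℂ)) = Φ (d : Matrix _ _ _) *
            Φ ((p⁻¹ : (Matrix (Fin N) (Fin N) (PowerSeries ℂ))ˣ) : Matrix _ _ _) := by
        simp
      have e2 : Φ (d : Matrix _ _ _) =
          Matrix.diagonal (fun i => HahnSeries.ofPowerSeries ℤ ℂ (u i)) := by
        rw [hd]
        simp [Φ, Matrix.diagonal_map, Function.comp_def]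
      have e3 : Matrix.diagonal (fun i => (B i i)⁻¹) *
          (Matrix.diagonal (fun i => (HahnSeries.single (μ i) 1 : LaurentSeries ℂ)) *
          Matrix.diagonal (fun i => HahnSeries.ofPowerSeries ℤ ℂ (u i))) = 1 := by
        rw [Matrix.diagonal_mul_diagonal, Matrix.diagonal_mul_diagonal, ← Matrix.diagonal_one]
        congr 1
        funext i
        rw [← hf i, inv_mul_cancel₀ (hdiag i)]
      have e4 : B * Φ ((p⁻¹ : (Matrix (Fin N) (Fin N) (PowerSeries ℂ))ˣ) : Matrix _ _ _) = A := by
        have : B = A * Φ (p : Matrix _ _ _) := hB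
        rw [this, Matrix.mul_assoc, ← map_mul, Units.mul_inv, map_one, Matrix.mul_one]
      rw [e1, e2]
      calc A = B * 1 * Φ ((p⁻¹ : (Matrix (Fin N) (Fin N) (PowerSeries ℂ))ˣ) : Matrix _ _ _) := by
            rw [Matrix.mul_one, e4]
        _ = _ := by rw [← e3]; simp only [Matrix.mul_assoc]
  · intro U U' μ μ' K K' hU hU' hK hKi hK' hKi' h
    funext i
    exact le_antisymm (iw_le U' U μ' μ K' K hU' hU hKi' hK h.symm i)
      (iw_le U U' μ μ' K K' hU hU' hKi hK' h i)
end

section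
/- Fix integers N ≥ 1 and n ≥ 1, let x₁,…,x_n ∈ ℂ, and set f = (z−x₁)⋯(z−x_n) ∈ ℂ[z]. Let L₀ = ℂ[z]^N ⊆ ℂ(z)^N be the standard lattice. For a ℂ[z]-submodule L of ℂ(z)^N, the following are equivalent: (i) there exists an N×N matrix β, invertible over ℂ(z), such that all entries of β and of β⁻¹ lie in the subring ℂ[z, f⁻¹] of ℂ(z), and L = β·L₀; (ii) there exists a positive integer k such that f^k·L₀ ⊆ L ⊆ f^{−k}·L₀. -/
set_option synthInstance.maxHeartbeats 1000000
set_option maxHeartbeats 1000000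

section BDHelpers

variable {R K : Type*} [CommRing R] [IsDomain R] [IsPrincipalIdealRing R] [Field K] [Algebra R K]

/-- Common denominator for the entries of a matrix. -/
theorem bd_common_denominator {N : ℕ} (F : K) (a : R) (ha : algebraMap R K a = F) (hF : F ≠ 0)
    (β : Matrix (Fin N) (Fin N) K)
    (h : ∀ i j, ∃ (p : R) (k : ℕ), β i j = algebraMap R K p / F ^ k) :
    ∃ k : ℕ, ∀ m, k ≤ m → ∃ B : Matrix (Fin N) (Fin N) R,
      ∀ i j, F ^ m * β i j = algebraMap R K (B i j) := by
  choose p e he using h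
  refine ⟨∑ i, ∑ j, e i j, fun m hm => ⟨fun i j => a ^ (m - e i j) * p i j, fun i j => ?_⟩⟩
  have h1 : e i j ≤ m := by
    refine le_trans ?_ hm
    refine le_trans ?_ (Finset.single_le_sum (f := fun i => ∑ j, e i j)
      (fun _ _ => Nat.zero_le _) (Finset.mem_univ i))
    exact Finset.single_le_sum (f := fun j => e i j)
      (fun _ _ => Nat.zero_le _) (Finset.mem_univ j)
  rw [he, map_mul, map_pow, ha]
  obtain ⟨c, rfl⟩ := Nat.exists_eq_add_of_le h1
  rw [Nat.add_sub_cancel_left, pow_add]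
  field_simp

theorem bd_mulVec_integral {N : ℕ} (c : K) (β : Matrix (Fin N) (Fin N) K)
    (B : Matrix (Fin N) (Fin N) R) (h : ∀ i j, c * β i j = algebraMap R K (B i j))
    (v : Fin N → K) (u : Fin N → R) (hv : ∀ i, v i = algebraMap R K (u i)) (i : Fin N) :
    c * (β.mulVec v) i = algebraMap R K ((B.mulVec u) i) := by
  simp only [Matrix.mulVec, dotProduct, Finset.mul_sum, map_sum, map_mul]
  refine Finset.sum_congr rfl fun j _ => ?_
  rw [← mul_assoc, h, hv]

/-- A submodule of `R^N` containing `a • R^N` is the image of a square matrix. -/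
theorem bd_exists_matrix {N : ℕ} (a : R) (ha : a ≠ 0) (M : Submodule R (Fin N → R))
    (h : ∀ u, a • u ∈ M) :
    ∃ B C : Matrix (Fin N) (Fin N) R, B * C = a • (1 : Matrix (Fin N) (Fin N) R) ∧
      ∀ u, u ∈ M ↔ ∃ c, B.mulVec c = u := by
  have hr : Module.finrank R M = N := by
    apply le_antisymm
    · simpa using Submodule.finrank_le M
    · let g : (Fin N → R) →ₗ[R] M := LinearMap.codRestrict M (a • LinearMap.id) (fun u => h u)
      have hg : Function.Injective g := by
        intro u v huv
        have h2 : a • u = a • v := congrArg Subtype.val huv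
        exact smul_right_injective _ ha h2
      simpa using LinearMap.finrank_le_finrank_of_injective hg
  let b := Module.finBasisOfFinrankEq R M hr
  let B : Matrix (Fin N) (Fin N) R := Matrix.of fun i j => (b j : Fin N → R) i
  have hB : ∀ c, B.mulVec c = ((∑ j, c j • b j : M) : Fin N → R) := by
    intro c
    ext i
    simp [B, Matrix.mulVec, dotProduct, mul_comm]
  have hM : ∀ u, u ∈ M ↔ ∃ c, B.mulVec c = u := by
    intro u
    constructor
    · intro hu
      refine ⟨b.repr ⟨u, hu⟩, ?_⟩
      rw [hB, b.sum_repr]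
    · rintro ⟨c, rfl⟩
      rw [hB]
      exact Subtype.property _
  choose c hc using fun j => (hM _).1 (h (Pi.single j 1))
  refine ⟨B, Matrix.of fun i j => c j i, ?_, hM⟩
  ext i j
  have := congrFun (hc j) i
  simp only [Matrix.mulVec, dotProduct] at this
  simp [Matrix.mul_apply, this, Matrix.one_apply, Pi.single_apply]

theorem bd_general [FaithfulSMul R K] (N : ℕ) (f : R) (hf : f ≠ 0)
    (L₀ : Submodule R (Fin N → K))
    (hL₀ : ∀ v, v ∈ L₀ ↔ ∀ i, ∃ p : R, v i = algebraMap R K p)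
    (L : Submodule R (Fin N → K)) :
    (∃ β γ : Matrix (Fin N) (Fin N) K,
        β * γ = 1 ∧ γ * β = 1 ∧
        (∀ i j, ∃ (p : R) (k : ℕ), β i j = algebraMap R K p / (algebraMap R K f) ^ k) ∧
        (∀ i j, ∃ (p : R) (k : ℕ), γ i j = algebraMap R K p / (algebraMap R K f) ^ k) ∧
        (L : Set (Fin N → K)) = β.mulVec '' (L₀ : Set (Fin N → K))) ↔
    (∃ k : ℕ, 0 < k ∧
        (∀ v ∈ L₀, (algebraMap R K f) ^ k • v ∈ L) ∧
        (∀ w ∈ L, (algebraMap R K f) ^ k • w ∈ L₀)) := by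
  have hF : algebraMap R K f ≠ 0 := by
    simpa using (FaithfulSMul.algebraMap_injective R K).ne hf
  constructor
  · rintro ⟨β, γ, h1, h2, h3, h4, h5⟩
    obtain ⟨k, hk⟩ := bd_common_denominator _ f rfl hF β h3
    obtain ⟨l, hl⟩ := bd_common_denominator _ f rfl hF γ h4
    obtain ⟨B, hB⟩ := hk (k + l + 1) (by omega)
    obtain ⟨C, hC⟩ := hl (k + l + 1) (by omega)
    refine ⟨k + l + 1, by omega, ?_, ?_⟩
    · intro v hv
      choose u hu using (hL₀ v).1 hv
      rw [← SetLike.mem_coe, h5]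
      refine ⟨(algebraMap R K f) ^ (k + l + 1) • γ.mulVec v, ?_, ?_⟩
      · rw [SetLike.mem_coe, hL₀]
        exact fun i => ⟨_, bd_mulVec_integral _ γ C hC v u hu i⟩
      · rw [Matrix.mulVec_smul, Matrix.mulVec_mulVec, h1, Matrix.one_mulVec]
    · intro w hw
      rw [← SetLike.mem_coe, h5] at hw
      obtain ⟨v, hv, rfl⟩ := hw
      choose u hu using (hL₀ v).1 hv
      rw [hL₀]
      exact fun i => ⟨_, bd_mulVec_integral _ β B hB v u hu i⟩
  · rintro ⟨k, -, h1, h2⟩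
    set F := algebraMap R K f with hFdef
    have hFk : F ^ k ≠ 0 := pow_ne_zero _ hF
    let φ : (Fin N → R) →ₗ[R] (Fin N → K) :=
      { toFun := fun u i => (F ^ k)⁻¹ * algebraMap R K (u i)
        map_add' := fun u v => by ext i; simp [mul_add]
        map_smul' := fun r u => by
          ext i; simp [Algebra.smul_def, mul_left_comm] }
    have hφ : ∀ u i, φ u i = (F ^ k)⁻¹ * algebraMap R K (u i) := fun _ _ => rfl
    obtain ⟨B, C, hBC, hM⟩ := bd_exists_matrix (f ^ k * f ^ k)
      (mul_ne_zero (pow_ne_zero _ hf) (pow_ne_zero _ hf)) (L.comap φ) (by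
        intro u
        rw [Submodule.mem_comap]
        have := h1 (fun i => algebraMap R K (u i)) ((hL₀ _).2 fun i => ⟨_, rfl⟩)
        convert this using 1
        ext i
        rw [hφ]
        simp only [Pi.smul_apply, smul_eq_mul, map_mul, map_pow, ← hFdef]
        field_simp)
    let β : Matrix (Fin N) (Fin N) K := Matrix.of fun i j => algebraMap R K (B i j) / F ^ k
    let γ : Matrix (Fin N) (Fin N) K := Matrix.of fun i j => algebraMap R K (C i j) / F ^ k
    have hβγ : β * γ = 1 := by
      ext i j
      have h3 := congrArg (algebraMap R K) (congrFun (congrFun hBC i) j)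
      rw [Matrix.mul_apply, map_sum] at h3
      rw [Matrix.mul_apply]
      have h4 : ∀ l, β i l * γ l j = (F ^ k * F ^ k)⁻¹ * algebraMap R K (B i l * C l j) := by
        intro l
        simp only [β, γ, Matrix.of_apply, map_mul]
        field_simp
      simp only [h4]
      rw [← Finset.mul_sum, h3]
      by_cases hij : i = j
      · subst hij
        simp only [Matrix.smul_apply, Matrix.one_apply_eq, smul_eq_mul, mul_one, map_mul, map_pow,
          ← hFdef]
        field_simp
      · simp [Matrix.one_apply_ne hij]
    have hβ : ∀ c : Fin N → R, β.mulVec (fun i => algebraMap R K (c i)) = φ (B.mulVec c) := by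
      intro c
      ext i
      rw [hφ, ← bd_mulVec_integral (F ^ k) β B ?_ _ c (fun _ => rfl) i]
      · field_simp
      · intro i j
        simp only [β, Matrix.of_apply]
        field_simp
    refine ⟨β, γ, hβγ, mul_eq_one_comm.1 hβγ, fun i j => ⟨B i j, k, rfl⟩,
      fun i j => ⟨C i j, k, rfl⟩, ?_⟩
    ext w
    constructor
    · intro hw
      choose u hu using (hL₀ _).1 (h2 w hw)
      have hw' : φ u = w := by
        ext i
        rw [hφ, ← hu]
        simp only [Pi.smul_apply, smul_eq_mul]
        field_simp
      obtain ⟨c, hc⟩ := (hM u).1 (by rw [Submodule.mem_comap, hw']; exact hw)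
      refine ⟨fun i => algebraMap R K (c i), (hL₀ _).2 fun i => ⟨_, rfl⟩, ?_⟩
      rw [hβ, hc, hw']
    · rintro ⟨v, hv, rfl⟩
      choose c hc using (hL₀ v).1 hv
      obtain rfl : v = fun i => algebraMap R K (c i) := funext hc
      rw [hβ]
      exact (hM _).2 ⟨c, rfl⟩

end BDHelpers

/-- Characterization of the lattices appearing in the Beilinson–Drinfeld Grassmannian for
`GL_N` (Example `ex:BDGrIndVar` of Baumann–Gaussent–Littelmann): with
`f = (z−x₁)⋯(z−x_n)` and `L₀ = ℂ[z]^N` the standard lattice inside `ℂ(z)^N`, a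
`ℂ[z]`-submodule `L` of `ℂ(z)^N` is of the form `β·L₀` for a matrix `β` invertible over
`ℂ(z)` with entries of `β` and `β⁻¹` in `ℂ[z, f⁻¹]` if and only if
`f^k·L₀ ⊆ L ⊆ f^{−k}·L₀` for some positive integer `k`. -/
theorem bd_lattice_characterization (N n : ℕ) (hN : 1 ≤ N) (hn : 1 ≤ n)
    (x : Fin n → ℂ)
    (L₀ : Submodule (Polynomial ℂ) (Fin N → RatFunc ℂ))
    (hL₀ : ∀ v, v ∈ L₀ ↔ ∀ i, ∃ p : Polynomial ℂ,
      v i = algebraMap (Polynomial ℂ) (RatFunc ℂ) p)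
    (L : Submodule (Polynomial ℂ) (Fin N → RatFunc ℂ)) :
    (∃ β γ : Matrix (Fin N) (Fin N) (RatFunc ℂ),
        β * γ = 1 ∧ γ * β = 1 ∧
        (∀ i j, ∃ (p : Polynomial ℂ) (k : ℕ),
          β i j = algebraMap (Polynomial ℂ) (RatFunc ℂ) p /
            (algebraMap (Polynomial ℂ) (RatFunc ℂ)
              (∏ l, (Polynomial.X - Polynomial.C (x l)))) ^ k) ∧
        (∀ i j, ∃ (p : Polynomial ℂ) (k : ℕ),
          γ i j = algebraMap (Polynomial ℂ) (RatFunc ℂ) p /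
            (algebraMap (Polynomial ℂ) (RatFunc ℂ)
              (∏ l, (Polynomial.X - Polynomial.C (x l)))) ^ k) ∧
        (L : Set (Fin N → RatFunc ℂ)) =
          β.mulVec '' (L₀ : Set (Fin N → RatFunc ℂ))) ↔
    (∃ k : ℕ, 0 < k ∧
        (∀ v ∈ L₀, (algebraMap (Polynomial ℂ) (RatFunc ℂ)
            (∏ l, (Polynomial.X - Polynomial.C (x l)))) ^ k • v ∈ L) ∧
        (∀ w ∈ L, (algebraMap (Polynomial ℂ) (RatFunc ℂ)
            (∏ l, (Polynomial.X - Polynomial.C (x l)))) ^ k • w ∈ L₀)) := by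
  exact bd_general N _
    (Finset.prod_ne_zero_iff.2 fun l _ => Polynomial.X_sub_C_ne_zero (x l)) L₀ hL₀ L
end

section
/- Let R = ℂ[x₁, x₂, a, b, c, d] be the polynomial ring in six variables over ℂ, let 𝔭 be the ideal generated by {a, b, x₂ − x₁}, and let 𝔮 be the ideal generated by {b, a·c + x₂ − x₁}. Then: (1) 𝔭 is a prime ideal of R and 𝔮 ⊆ 𝔭; (2) in the local ring A obtained by localizing R/𝔮 at the prime ideal 𝔭/𝔮, the image of c is invertible and the maximal ideal of A is generated by the image of x₂ − x₁. (Consequently the order of vanishing of x₂ − x₁ along V(𝔭) on V(𝔮) equals one; this is the computation showing that ⟨Z_{1,−1}⟩ appears with coefficient one in ⟨⟨Z_{2,−2}⟩⟩ in the paper's SL₃ example.) -/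
open MvPolynomial

/-- The polynomial ring `R = ℂ[x₁, x₂, a, b, c, d]`, with the variables
`x₁, x₂, a, b, c, d` being `X 0, X 1, X 2, X 3, X 4, X 5`. -/
noncomputable abbrev SL3Ring : Type := MvPolynomial (Fin 6) ℂ

/-- The ideal `𝔭 = (a, b, x₂ − x₁)`. -/
noncomputable def SL3p : Ideal SL3Ring := Ideal.span {X 2, X 3, X 1 - X 0}

/-- The ideal `𝔮 = (b, a·c + x₂ − x₁)`. -/
noncomputable def SL3q : Ideal SL3Ring := Ideal.span {X 3, X 2 * X 4 + X 1 - X 0}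

noncomputable def SL3phi : SL3Ring →ₐ[ℂ] SL3Ring :=
  aeval ![X 0, X 0, 0, 0, X 4, X 5]

lemma SL3p_le : SL3p ≤ RingHom.ker SL3phi := by
  unfold SL3p
  rw [Ideal.span_le]
  rintro f (rfl | rfl | rfl) <;> simp [SL3phi, RingHom.mem_ker]

lemma SL3p_mk_phi :
    (Ideal.Quotient.mkₐ ℂ SL3p).comp SL3phi = Ideal.Quotient.mkₐ ℂ SL3p := by
  have h2 : Ideal.Quotient.mk SL3p (X 2) = 0 :=
    Ideal.Quotient.eq_zero_iff_mem.2 (Ideal.subset_span (by simp))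
  have h3 : Ideal.Quotient.mk SL3p (X 3) = 0 :=
    Ideal.Quotient.eq_zero_iff_mem.2 (Ideal.subset_span (by simp))
  have h1 : Ideal.Quotient.mk SL3p (X 1) = Ideal.Quotient.mk SL3p (X 0) :=
    Ideal.Quotient.eq.2 (Ideal.subset_span (by simp))
  apply MvPolynomial.algHom_ext
  intro i
  fin_cases i <;> simp [SL3phi, h1, h2, h3]

lemma SL3p_eq : SL3p = RingHom.ker SL3phi := by
  refine le_antisymm SL3p_le fun f hf => ?_
  have h := DFunLike.congr_fun SL3p_mk_phi f
  rw [RingHom.mem_ker] at hf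
  rw [AlgHom.comp_apply, hf, map_zero] at h
  exact Ideal.Quotient.eq_zero_iff_mem.1 h.symm

lemma SL3q_le : SL3q ≤ SL3p := by
  rw [SL3p_eq]
  unfold SL3q
  rw [Ideal.span_le]
  rintro f (rfl | rfl) <;> simp [SL3phi, RingHom.mem_ker]

lemma SL3c_notMem : (X 4 : SL3Ring) ∉ SL3p := by
  rw [SL3p_eq, RingHom.mem_ker]
  simp [SL3phi]

/-- The local computation in the `SL₃` example of Baumann–Gaussent–Littelmann
(sect. `ss:Example`): `𝔭 = (a, b, x₂−x₁)` is prime, `𝔮 = (b, ac+x₂−x₁) ⊆ 𝔭`, and in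
the localization `A` of `R/𝔮` at `𝔭/𝔮` the image of `c` is invertible and the maximal
ideal of `A` is generated by the image of `x₂ − x₁`. -/
theorem sl3_order_of_vanishing_one :
    SL3p.IsPrime ∧ SL3q ≤ SL3p ∧
    ∀ (hP : (Ideal.map (Ideal.Quotient.mk SL3q) SL3p).IsPrime),
      letI := hP
      IsUnit (algebraMap (SL3Ring ⧸ SL3q)
          (Localization.AtPrime (Ideal.map (Ideal.Quotient.mk SL3q) SL3p))
          (Ideal.Quotient.mk SL3q (X 4))) ∧
      IsLocalRing.maximalIdeal
          (Localization.AtPrime (Ideal.map (Ideal.Quotient.mk SL3q) SL3p)) =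
        Ideal.span {algebraMap (SL3Ring ⧸ SL3q)
          (Localization.AtPrime (Ideal.map (Ideal.Quotient.mk SL3q) SL3p))
          (Ideal.Quotient.mk SL3q (X 1 - X 0))} := by
  refine ⟨by rw [SL3p_eq]; exact RingHom.ker_isPrime _, SL3q_le, ?_⟩
  intro hP
  let := hP
  have hc : IsUnit (algebraMap (SL3Ring ⧸ SL3q)
      (Localization.AtPrime (Ideal.map (Ideal.Quotient.mk SL3q) SL3p))
      (Ideal.Quotient.mk SL3q (X 4))) := by
    refine IsLocalization.map_units (M := (Ideal.map (Ideal.Quotient.mk SL3q) SL3p).primeCompl)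
      _ ⟨_, fun h => SL3c_notMem ?_⟩
    exact (Ideal.mem_quotient_iff_mem SL3q_le).1 h
  refine ⟨hc, ?_⟩
  rw [← Localization.AtPrime.map_eq_maximalIdeal]
  have h3 : Ideal.Quotient.mk SL3q (X 3) = 0 :=
    Ideal.Quotient.eq_zero_iff_mem.2 (Ideal.subset_span (by simp))
  have h2 : Ideal.Quotient.mk SL3q (X 2) * Ideal.Quotient.mk SL3q (X 4)
      = Ideal.Quotient.mk SL3q (-1) * Ideal.Quotient.mk SL3q (X 1 - X 0) := by
    rw [← map_mul, ← map_mul]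
    refine Ideal.Quotient.eq.2 (Ideal.subset_span ?_)
    right
    simp only [Set.mem_singleton_iff]
    ring
  apply le_antisymm
  · rw [Ideal.map_le_iff_le_comap, Ideal.map_le_iff_le_comap]
    conv_lhs => unfold SL3p
    rw [Ideal.span_le]
    rintro f (rfl | rfl | rfl)
    · rw [SetLike.mem_coe, Ideal.mem_comap, Ideal.mem_comap]
      rw [← Ideal.mul_unit_mem_iff_mem _ hc, ← map_mul, h2, map_mul]
      exact Ideal.mul_mem_left _ _ (Ideal.mem_span_singleton_self _)
    · rw [SetLike.mem_coe, Ideal.mem_comap, Ideal.mem_comap]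
      rw [h3, map_zero]
      exact zero_mem _
    · exact Ideal.mem_span_singleton_self _
  · rw [Ideal.span_singleton_le_iff_mem]
    exact Ideal.mem_map_of_mem _ (Ideal.mem_map_of_mem _ (Ideal.subset_span (by simp)))
end
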